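/- For each integer n ≥ 0 and q on the unit disk q = e^{2πiτ}, define G₂(τ) = -1/24 + ∑_{n≥1} σ₁(n)qⁿ and G₂*(τ) = G₂(τ) + 1/(8π Im τ). Then the function m(τ) = -8π Im(τ) G₂*(τ) satisfies m(τ) = -8π Im(τ) G₂(τ) - 1, and the claimed single-valued period matrix identity: if ω₁, ω₂, η₁, η₂ ∈ ℂ satisfy ω₂ = τω₁, ω₁η₂ - η₁ω₂ = 2πi, and G₂(τ) = -(1/2)ω₁η₁/(2πi)², then with P = [[ω₁,η₁],[ω₂,η₂]] the matrix conj(P)⁻¹P equals diag(conj(λ)⁻¹, conj(λ)) · [[m(conj(τ)), (4π Im τ)⁻¹(m(τ)m(conj(τ)) - 1)],[-4π Im τ, -m(τ)]] · diag(λ, λ⁻¹), where ω₁ = 2πi λ and m(conj(τ)) denotes the complex conjugate relation -8π Im(τ)conj(G₂*(τ)) appropriately interpreted. -/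

import Mathlib

open Matrix Complex

/-- `m(τ) = -8π Im(τ) G₂*(τ)` where `G₂*(τ) = G₂(τ) + 1/(8π Im τ)`. -/
noncomputable def mval (τ G₂ : ℂ) : ℂ :=
  (-(8 * (Real.pi : ℂ) * (τ.im : ℂ))) * (G₂ + 1 / (8 * (Real.pi : ℂ) * (τ.im : ℂ)))

/-- Single-valued period matrix of the universal elliptic curve: with `ω₁ = 2πiλ`,
`ω₂ = τω₁`, the Legendre relation `ω₁η₂ - η₁ω₂ = 2πi` and Fricke's relation
`G₂ = -(1/2)ω₁η₁/(2πi)²`, one has `m(τ) = -8π Im(τ) G₂(τ) - 1` and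
`conj(P)⁻¹ P = diag(conj(λ)⁻¹, conj λ) · [[conj m, (4π Im τ)⁻¹(m·conj m - 1)],
[-4π Im τ, -m]] · diag(λ, λ⁻¹)` where `P = [[ω₁,η₁],[ω₂,η₂]]` and `m(τ̄) := conj(m(τ))`. -/
theorem stmt_15 (τ lam η₁ η₂ G₂ : ℂ) (hτ : 0 < τ.im) (hlam : lam ≠ 0)
    (hLeg : (2 * (Real.pi : ℂ) * Complex.I * lam) * η₂
        - η₁ * (τ * (2 * (Real.pi : ℂ) * Complex.I * lam)) = 2 * (Real.pi : ℂ) * Complex.I)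
    (hFricke : G₂ = -(1 / 2) * ((2 * (Real.pi : ℂ) * Complex.I * lam) * η₁)
        / (2 * (Real.pi : ℂ) * Complex.I) ^ 2) :
    mval τ G₂ = -(8 * (Real.pi : ℂ) * (τ.im : ℂ)) * G₂ - 1 ∧
    ((!![2 * (Real.pi : ℂ) * Complex.I * lam, η₁;
        τ * (2 * (Real.pi : ℂ) * Complex.I * lam), η₂]).map (starRingEnd ℂ))⁻¹
        * !![2 * (Real.pi : ℂ) * Complex.I * lam, η₁;
            τ * (2 * (Real.pi : ℂ) * Complex.I * lam), η₂]
      = !![(starRingEnd ℂ lam)⁻¹, 0; 0, starRingEnd ℂ lam]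
        * !![starRingEnd ℂ (mval τ G₂),
              (4 * (Real.pi : ℂ) * (τ.im : ℂ))⁻¹ *
                (mval τ G₂ * starRingEnd ℂ (mval τ G₂) - 1);
            -(4 * (Real.pi : ℂ) * (τ.im : ℂ)), -(mval τ G₂)]
        * !![lam, 0; 0, lam⁻¹] := by
  have hpi : (Real.pi : ℂ) ≠ 0 := by exact_mod_cast Real.pi_ne_zero
  have hy : (τ.im : ℂ) ≠ 0 := by exact_mod_cast hτ.ne'
  have hI : Complex.I ≠ 0 := Complex.I_ne_zero
  have hc2 : starRingEnd ℂ 2 = 2 := Complex.conj_ofNat 2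
  have hI3 : Complex.I ^ 3 = -Complex.I := Complex.I_pow_three
  have hI4 : Complex.I ^ 4 = 1 := Complex.I_pow_four
  have hI2 : Complex.I ^ 2 = -1 := Complex.I_sq
  have h1 : mval τ G₂ = -(8 * (Real.pi : ℂ) * (τ.im : ℂ)) * G₂ - 1 := by
    unfold mval
    field_simp
    ring
  refine ⟨h1, ?_⟩
  have hm : mval τ G₂ = -2 * Complex.I * (τ.im : ℂ) * lam * η₁ - 1 := by
    rw [h1, hFricke]
    field_simp
    linear_combination (8 * (τ.im : ℂ) * lam * η₁) * hI2
  have hη : η₂ = lam⁻¹ + η₁ * τ := by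
    have h2 : (2 * (Real.pi : ℂ) * Complex.I) ≠ 0 := by simp [hpi]
    apply mul_left_cancel₀ (mul_ne_zero h2 hlam)
    field_simp
    apply mul_left_cancel₀ h2
    linear_combination hLeg
  have hmc : starRingEnd ℂ (mval τ G₂)
      = 2 * Complex.I * (τ.im : ℂ) * starRingEnd ℂ lam * starRingEnd ℂ η₁ - 1 := by
    rw [hm]
    simp [hc2]
  have hb : starRingEnd ℂ lam ≠ 0 := by simpa using hlam
  have hτc : starRingEnd ℂ τ = τ - 2 * Complex.I * (τ.im : ℂ) := by
    apply Complex.ext <;> simp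
    ring
  have hηc : starRingEnd ℂ η₂ = (starRingEnd ℂ lam)⁻¹
      + starRingEnd ℂ η₁ * (τ - 2 * Complex.I * (τ.im : ℂ)) := by
    rw [hη, map_add, map_mul, hτc, map_inv₀]
  have hmap : (!![2 * (Real.pi : ℂ) * Complex.I * lam, η₁;
        τ * (2 * (Real.pi : ℂ) * Complex.I * lam), η₂]).map (starRingEnd ℂ)
      = !![-(2 * (Real.pi : ℂ) * Complex.I * starRingEnd ℂ lam), starRingEnd ℂ η₁;
        -((τ - 2 * Complex.I * (τ.im : ℂ)) * (2 * (Real.pi : ℂ) * Complex.I * starRingEnd ℂ lam)),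
        starRingEnd ℂ η₂] := by
    ext i j
    fin_cases i <;> fin_cases j <;> simp [hτc, hc2]
  rw [hmap, hηc, hmc, hm, hη]
  generalize starRingEnd ℂ lam = b at *
  generalize starRingEnd ℂ η₁ = e at *
  generalize (τ.im : ℂ) = y at *
  generalize (Real.pi : ℂ) = p at *
  have hdet : (!![-(2 * p * Complex.I * b), e;
        -((τ - 2 * Complex.I * y) * (2 * p * Complex.I * b)),
        b⁻¹ + e * (τ - 2 * Complex.I * y)]).det = -(2 * p * Complex.I) := by
    rw [Matrix.det_fin_two_of]
    field_simp
    ring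
  have hunit : IsUnit (!![-(2 * p * Complex.I * b), e;
        -((τ - 2 * Complex.I * y) * (2 * p * Complex.I * b)),
        b⁻¹ + e * (τ - 2 * Complex.I * y)]).det := by
    rw [hdet]
    simp [hpi]
  have key : ∀ A B R : Matrix (Fin 2) (Fin 2) ℂ, IsUnit A.det → B = A * R → A⁻¹ * B = R := by
    intro A B R hA hB
    rw [hB, ← Matrix.mul_assoc, Matrix.nonsing_inv_mul _ hA, Matrix.one_mul]
  apply key _ _ _ hunit
  ext i j
  fin_cases i <;> fin_cases j <;> simp [Matrix.mul_apply, Fin.sum_univ_two] <;> field_simp <;>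
    ring_nf <;> simp only [hI2, hI3, hI4] <;> ring_nf
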